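/- Let V be a smooth n-vector field on an open set U ⊆ ℝⁿ and x ∈ U. Then V has constant coefficients on a neighbourhood of x if and only if either V vanishes identically on some neighbourhood of x, or V_x ≠ 0. -/

import Mathlib

/-- Constant coefficients for a `q`-vector field (see context). -/
def HasConstantCoefficientsVecAt (n q : ℕ) (U : Set (Fin n → ℝ))
    (V : (Fin n → ℝ) → (((Fin n → ℝ) →L[ℝ] ℝ) [×q]→L[ℝ] ℝ)) (x : Fin n → ℝ) : Prop :=
  ∃ W : Set (Fin n → ℝ), IsOpen W ∧ x ∈ W ∧ W ⊆ U ∧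
    ∃ u : (Fin n → ℝ) → (Fin n → ℝ),
      ContDiffOn ℝ (⊤ : ℕ∞) u W ∧ Set.InjOn u W ∧ IsOpen (u '' W) ∧
      (∀ y ∈ W, Function.Bijective (fderiv ℝ u y)) ∧
      ∃ c : ((Fin n → ℝ) →L[ℝ] ℝ) [×q]→L[ℝ] ℝ,
        ∀ y ∈ W, ∀ w : Fin q → ((Fin n → ℝ) →L[ℝ] ℝ),
          c w = V y (fun i => (w i).comp (fderiv ℝ u y))

open scoped ContDiff Topology

/-- Smooth dependence of an integral over the unit interval on parameters. -/
theorem contDiff_nat_unit_integral {E : Type} [NormedAddCommGroup E] [NormedSpace ℝ E]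
    [ProperSpace E] (k : ℕ) :
    ∀ (F : Type) [NormedAddCommGroup F] [NormedSpace ℝ F] (h : E × ℝ → F),
      ContDiff ℝ ∞ h → ContDiff ℝ k (fun y => ∫ s in (0 : ℝ)..1, h (y, s)) := by
  induction k with
  | zero =>
    intro F _ _ h hh
    have hc := hh.continuous
    refine contDiff_zero.2 ?_
    exact intervalIntegral.continuous_parametric_intervalIntegral_of_continuous'
      (f := fun y s => h (y, s)) hc 0 1
  | succ k ih =>
    intro F _ _ h hh
    have hc := hh.continuous
    have hfd : ContDiff ℝ ∞ (fun p : E × ℝ =>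
        (fderiv ℝ h p).comp (ContinuousLinearMap.inl ℝ E ℝ)) := by
      have h1 : ContDiff ℝ ∞ (fderiv ℝ h) := (contDiff_infty_iff_fderiv.1 hh).2
      exact h1.clm_comp contDiff_const
    have hfc := hfd.continuous
    push_cast
    refine contDiff_succ_iff_hasFDerivAt.2 ⟨_, ih _ _ hfd, fun y => ?_⟩
    obtain ⟨C, hC⟩ := ((isCompact_closedBall y 1).prod
      (isCompact_Icc (a := (0 : ℝ)) (b := 1))).exists_bound_of_continuousOn hfc.continuousOn
    refine intervalIntegral.hasFDerivAt_integral_of_dominated_of_fderiv_le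
      (F := fun y s => h (y, s))
      (F' := fun y s => (fderiv ℝ h (y, s)).comp (ContinuousLinearMap.inl ℝ E ℝ))
      (s := Metric.closedBall y 1) (bound := fun _ => C)
      (Metric.closedBall_mem_nhds y one_pos) ?_ ?_ ?_ ?_ ?_ ?_
    · exact Filter.Eventually.of_forall fun z =>
        (show Continuous fun s : ℝ => h (z, s) by fun_prop).aestronglyMeasurable
    · exact (show Continuous fun s : ℝ => h (y, s) by fun_prop).intervalIntegrable _ _
    · exact (hfc.comp (show Continuous fun s : ℝ => (y, s) by fun_prop)).aestronglyMeasurable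
    · refine Filter.Eventually.of_forall fun t ht z hz => hC (z, t) ⟨hz, ?_⟩
      rw [Set.uIoc_of_le zero_le_one] at ht
      exact ⟨ht.1.le, ht.2⟩
    · exact intervalIntegrable_const
    · refine Filter.Eventually.of_forall fun t ht z hz => ?_
      have h1 : HasFDerivAt h (fderiv ℝ h (z, t)) (z, t) :=
        (hh.differentiable (by simp) _).hasFDerivAt
      exact h1.comp z (hasFDerivAt_prodMk_left z t)

/-- Extend a smooth function defined near a point to a global one. -/
theorem exists_global_extension {n : ℕ} {U : Set (Fin n → ℝ)} (hU : IsOpen U)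
    {g : (Fin n → ℝ) → ℝ} (hg : ContDiffOn ℝ ∞ g U) {x : Fin n → ℝ} (hx : x ∈ U) :
    ∃ G : (Fin n → ℝ) → ℝ, ContDiff ℝ ∞ G ∧ G =ᶠ[𝓝 x] g := by
  obtain ⟨r, hr, hrU⟩ := Metric.isOpen_iff.1 hU x hx
  let χ : ContDiffBump x := ⟨r / 4, r / 2, by positivity, by linarith⟩
  have hsub : tsupport χ ⊆ U := by
    rw [χ.tsupport_eq]
    exact (Metric.closedBall_subset_ball (by change r / 2 < r; linarith)).trans hrU
  refine ⟨fun y => χ y * g y, ?_, ?_⟩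
  · rw [contDiff_iff_contDiffAt]
    intro y
    by_cases hy : y ∈ tsupport χ
    · exact χ.contDiff.contDiffAt.mul (hg.contDiffAt (hU.mem_nhds (hsub hy)))
    · have : (fun y => χ y * g y) =ᶠ[𝓝 y] fun _ => 0 := by
        filter_upwards [(isClosed_tsupport χ).isOpen_compl.mem_nhds hy] with z hz
        rw [image_eq_zero_of_notMem_tsupport hz, zero_mul]
      exact contDiffAt_const.congr_of_eventuallyEq this
  · filter_upwards [χ.eventuallyEq_one] with y hy
    simp [hy]

/-- A smooth function with prescribed first partial derivative. -/
theorem exists_primitive {m : ℕ} (G : (Fin (m + 1) → ℝ) → ℝ) (hG : ContDiff ℝ ∞ G) :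
    ∃ Φ : (Fin (m + 1) → ℝ) → ℝ, ContDiff ℝ ∞ Φ ∧
      ∀ y, fderiv ℝ Φ y (Pi.single 0 1) = G y := by
  set e : Fin (m + 1) → ℝ := Pi.single 0 1 with he
  have he0 : e 0 = 1 := by simp [he]
  have hΦ : ContDiff ℝ ∞ (fun y : Fin (m + 1) → ℝ => ∫ s in (0 : ℝ)..1,
      y 0 * G (y + ((s - 1) * y 0) • e)) := by
    refine contDiff_infty.2 fun k => contDiff_nat_unit_integral k ℝ
      (fun p : (Fin (m + 1) → ℝ) × ℝ => p.1 0 * G (p.1 + ((p.2 - 1) * p.1 0) • e)) ?_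
    have h0 : ContDiff ℝ ∞ (fun p : (Fin (m + 1) → ℝ) × ℝ => p.1 0) :=
      (contDiff_apply ℝ ℝ (0 : Fin (m + 1))).comp contDiff_fst
    refine h0.mul (hG.comp ?_)
    exact contDiff_fst.add (((contDiff_snd.sub contDiff_const).mul h0).smul contDiff_const)
  refine ⟨_, hΦ, fun y => ?_⟩
  have h1 := (hΦ.differentiable (by simp) y).hasFDerivAt.hasLineDerivAt e
  have h2 : HasDerivAt (fun t : ℝ => ∫ r in (-(y 0))..t, G (y + r • e)) (G (y + (0:ℝ) • e)) 0 :=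
    ((hG.continuous.comp (show Continuous fun r : ℝ => y + r • e by fun_prop)).integral_hasStrictDerivAt
      (-(y 0)) 0).hasDerivAt
  have h3 : (fun t : ℝ => ∫ r in (-(y 0))..t, G (y + r • e)) =
      fun t : ℝ => ∫ s in (0 : ℝ)..1,
        (y + t • e) 0 * G ((y + t • e) + ((s - 1) * (y + t • e) 0) • e) := by
    funext t
    have := intervalIntegral.smul_integral_comp_mul_add (a := 0) (b := 1)
      (fun r => G (y + r • e)) (y 0 + t) (-(y 0))
    rw [intervalIntegral.integral_const_mul]
    simp only [smul_eq_mul, mul_zero, zero_add, mul_one] at this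
    rw [show y 0 + t + -(y 0) = t by ring] at this
    rw [← this]
    simp only [Pi.add_apply, Pi.smul_apply, he0, smul_eq_mul, mul_one]
    congr 2
    funext s
    congr 1
    rw [add_assoc, ← add_smul]
    congr 2
    ring
  rw [h3] at h2
  have := h1.unique h2
  simpa using this

/-- The standard basis of the continuous dual. -/
noncomputable def projBasis (n : ℕ) : Module.Basis (Fin n) ℝ ((Fin n → ℝ) →L[ℝ] ℝ) :=
  (Pi.basisFun ℝ (Fin n)).dualBasis.map LinearMap.toContinuousLinearMap

theorem projBasis_apply (n : ℕ) (i : Fin n) :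
    projBasis n i = ContinuousLinearMap.proj (R := ℝ) (φ := fun _ : Fin n => ℝ) i := by
  ext v
  simp [projBasis]

/-- Two alternating top-degree maps agreeing on the standard basis are equal. -/
theorem top_ext {n : ℕ} (A B : ((Fin n → ℝ) →L[ℝ] ℝ) [×n]→L[ℝ] ℝ)
    (hA : ∀ w : Fin n → ((Fin n → ℝ) →L[ℝ] ℝ), ∀ i j, i ≠ j → w i = w j → A w = 0)
    (hB : ∀ w : Fin n → ((Fin n → ℝ) →L[ℝ] ℝ), ∀ i j, i ≠ j → w i = w j → B w = 0)
    (h : A (projBasis n) = B (projBasis n)) : A = B := by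
  let A' : ((Fin n → ℝ) →L[ℝ] ℝ) [⋀^Fin n]→ₗ[ℝ] ℝ :=
    { A.toMultilinearMap with
      map_eq_zero_of_eq' := fun w i j hw hij => hA w i j hij hw }
  let B' : ((Fin n → ℝ) →L[ℝ] ℝ) [⋀^Fin n]→ₗ[ℝ] ℝ :=
    { B.toMultilinearMap with
      map_eq_zero_of_eq' := fun w i j hw hij => hB w i j hij hw }
  have hAB : A' = B' := by
    rw [A'.eq_smul_basis_det (projBasis n), B'.eq_smul_basis_det (projBasis n)]
    congr 1
  ext w
  exact congrArg (fun f => f w) hAB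

theorem update_value {m : ℕ} (A : ((Fin (m+1) → ℝ) →L[ℝ] ℝ) [×(m+1)]→L[ℝ] ℝ)
    (hA : ∀ w : Fin (m+1) → ((Fin (m+1) → ℝ) →L[ℝ] ℝ), ∀ i j, i ≠ j → w i = w j → A w = 0)
    (L : (Fin (m+1) → ℝ) →L[ℝ] ℝ) :
    A (Function.update (projBasis (m+1)) 0 L) =
      L (Pi.single 0 1) * A (projBasis (m+1)) := by
  have hL : L = ∑ j, L (Pi.single j 1) • projBasis (m+1) j := by
    ext v
    conv_lhs => rw [← (Pi.basisFun ℝ (Fin (m+1))).sum_repr v]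
    simp [projBasis_apply, mul_comm]
  conv_lhs => rw [hL]
  change A.toMultilinearMap _ = _
  rw [MultilinearMap.map_update_sum, Finset.sum_eq_single 0]
  · rw [MultilinearMap.map_update_smul, Function.update_eq_self]; rfl
  · intro j _ hj
    rw [MultilinearMap.map_update_smul]
    have := hA (Function.update (projBasis (m+1)) 0 (projBasis (m+1) j)) 0 j hj.symm
      (by simp [Function.update_of_ne hj])
    rw [show A.toMultilinearMap _ = 0 from this, smul_zero]
  · simp

/-- Example 1.19: a smooth `n`-vector field (top degree) on
`U ⊆ ℝⁿ` has constant coefficients on a neighbourhood of `x ∈ U` if and only if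
either it vanishes identically on some neighbourhood of `x`, or `V_x ≠ 0`. -/
theorem topVector_constantCoefficients_iff (n : ℕ) (U : Set (Fin n → ℝ))
    (hU : IsOpen U)
    (V : (Fin n → ℝ) → (((Fin n → ℝ) →L[ℝ] ℝ) [×n]→L[ℝ] ℝ))
    (hV : ContDiffOn ℝ (⊤ : ℕ∞) V U)
    (halt : ∀ y ∈ U, ∀ w : Fin n → ((Fin n → ℝ) →L[ℝ] ℝ), ∀ i j, i ≠ j → w i = w j →
      V y w = 0)
    (x : Fin n → ℝ) (hx : x ∈ U) :
    HasConstantCoefficientsVecAt n n U V x ↔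
      ((∃ W : Set (Fin n → ℝ), IsOpen W ∧ x ∈ W ∧ ∀ y ∈ W, V y = 0) ∨ V x ≠ 0) := by
  constructor
  · rintro ⟨W, hW, hxW, hWU, u, hu, hinj, hopen, hbij, c, hc⟩
    by_cases hVx : V x = 0
    · left
      refine ⟨W, hW, hxW, fun y hy => ?_⟩
      ext w
      let e : (Fin n → ℝ) ≃L[ℝ] (Fin n → ℝ) :=
        (LinearEquiv.ofBijective (fderiv ℝ u y).toLinearMap (hbij y hy)).toContinuousLinearEquiv
      have he : ∀ v, fderiv ℝ u y v = e v := fun v => rfl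
      have h1 := hc y hy (fun i => (w i).comp (e.symm : (Fin n → ℝ) →L[ℝ] (Fin n → ℝ)))
      rw [hc x hxW, hVx] at h1
      have h2 : (fun i => ((w i).comp (e.symm : (Fin n → ℝ) →L[ℝ] (Fin n → ℝ))).comp
          (fderiv ℝ u y)) = w := by
        funext i
        ext v
        simp [he]
      rw [h2] at h1
      exact h1.symm
    · exact Or.inr hVx
  · rintro (⟨W, hW, hxW, h0⟩ | hVx)
    · refine ⟨W ∩ U, hW.inter hU, ⟨hxW, hx⟩, Set.inter_subset_right, id, contDiffOn_id,
        Set.injOn_id _, by simpa using hW.inter hU, fun y _ => ?_, 0, fun y hy w => ?_⟩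
      · rw [fderiv_id]; exact Function.bijective_id
      · rw [h0 y hy.1]; rfl
    · obtain _ | m := n
      · refine ⟨U, hU, hx, subset_rfl, id, contDiffOn_id, Set.injOn_id _, by simp,
          fun y _ => ?_, V x, fun y hy w => ?_⟩
        · rw [fderiv_id]; exact Function.bijective_id
        · rw [Subsingleton.elim y x]
          congr 1
          exact Subsingleton.elim _ _
      · -- the scalar coefficient
        let ev : (((Fin (m+1) → ℝ) →L[ℝ] ℝ) [×(m+1)]→L[ℝ] ℝ) →L[ℝ] ℝ :=
          ContinuousMultilinearMap.apply ℝ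
            (fun _ : Fin (m+1) => (Fin (m+1) → ℝ) →L[ℝ] ℝ) ℝ (projBasis (m+1))
        have hev : ContDiff ℝ ∞ ev :=
          ContinuousLinearMap.contDiff (𝕜 := ℝ)
            (E := ((Fin (m+1) → ℝ) →L[ℝ] ℝ) [×(m+1)]→L[ℝ] ℝ) (F := ℝ) ev
        have hf : ContDiffOn ℝ ∞ (fun y => V y (projBasis (m+1))) U :=
          hev.comp_contDiffOn hV
        have hfx : V x (projBasis (m+1)) ≠ 0 := fun h =>
          hVx (top_ext _ 0 (halt x hx) (fun _ _ _ _ _ => rfl) h)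
        have hU' : IsOpen (U ∩ (fun y => V y (projBasis (m+1))) ⁻¹' {0}ᶜ) :=
          hf.continuousOn.isOpen_inter_preimage hU isOpen_compl_singleton
        have hg : ContDiffOn ℝ ∞ (fun y => (V y (projBasis (m+1)))⁻¹)
            (U ∩ (fun y => V y (projBasis (m+1))) ⁻¹' {0}ᶜ) :=
          (hf.mono Set.inter_subset_left).inv fun y hy => hy.2
        obtain ⟨G, hG, hGg⟩ := exists_global_extension hU' hg ⟨hx, hfx⟩
        obtain ⟨Φ, hΦ, hΦG⟩ := exists_primitive G hG
        obtain ⟨N, hNsub, hN, hxN⟩ := eventually_nhds_iff.1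
          (hGg.and (hU'.mem_nhds ⟨hx, hfx⟩))
        set e : Fin (m + 1) → ℝ := Pi.single 0 1 with he
        let p0 : (Fin (m+1) → ℝ) →L[ℝ] ℝ :=
          ContinuousLinearMap.proj (R := ℝ) (φ := fun _ : Fin (m+1) => ℝ) 0
        let u : (Fin (m+1) → ℝ) → (Fin (m+1) → ℝ) := fun y => y + (Φ y - p0 y) • e
        have hu : ContDiff ℝ ∞ u :=
          contDiff_id.add ((hΦ.sub p0.contDiff).smul contDiff_const)
        have hDu : ∀ y, HasFDerivAt u (ContinuousLinearMap.id ℝ _ +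
            (fderiv ℝ Φ y - p0).smulRight e) y := fun y =>
          (hasFDerivAt_id y).add
            (((hΦ.differentiable (by simp) y).hasFDerivAt.sub p0.hasFDerivAt).smul_const e)
        have hD0 : ∀ y v, fderiv ℝ u y v 0 = fderiv ℝ Φ y v := by
          intro y v
          rw [(hDu y).fderiv]
          simp [he, p0]
        have hDj : ∀ y v j, j ≠ 0 → fderiv ℝ u y v j = v j := by
          intro y v j hj
          rw [(hDu y).fderiv]
          simp [he, hj]
        have hbij : ∀ y ∈ N, Function.Bijective (fderiv ℝ u y) := by
          intro y hy
          have hGy : G y ≠ 0 := by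
            rw [(hNsub y hy).1]
            exact inv_ne_zero (hNsub y hy).2.2
          have hinj : Function.Injective (fderiv ℝ u y).toLinearMap := by
            rw [injective_iff_map_eq_zero]
            intro v hv
            have hv' : fderiv ℝ u y v = 0 := hv
            have hve : v = v 0 • e := by
              funext j
              by_cases hj : j = 0
              · subst hj; simp [he]
              · rw [← hDj y v j hj, hv']; simp [he, hj]
            have h0 : fderiv ℝ Φ y v = 0 := by rw [← hD0, hv']; rfl
            rw [hve, map_smul, hΦG, smul_eq_mul] at h0
            have := (mul_eq_zero.1 h0).resolve_right hGy
            rw [hve, this, zero_smul]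
          exact ⟨hinj, LinearMap.injective_iff_surjective.1 hinj⟩
        let ex : (Fin (m+1) → ℝ) ≃L[ℝ] (Fin (m+1) → ℝ) :=
          (LinearEquiv.ofBijective (fderiv ℝ u x).toLinearMap
            (hbij x hxN)).toContinuousLinearEquiv
        have hex : HasFDerivAt u (ex : (Fin (m+1) → ℝ) →L[ℝ] (Fin (m+1) → ℝ)) x := by
          have := (hu.differentiable (by simp) x).hasFDerivAt
          exact this
        let H := hu.contDiffAt.toOpenPartialHomeomorph u hex (by simp)
        have hHu : (H : (Fin (m+1) → ℝ) → (Fin (m+1) → ℝ)) = u := rfl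
        have hxH : x ∈ H.source := hu.contDiffAt.mem_toOpenPartialHomeomorph_source hex (by simp)
        have hval : ∀ y ∈ N, V y (fun i => (projBasis (m+1) i).comp (fderiv ℝ u y)) = 1 := by
          intro y hy
          have h1 : (fun i => (projBasis (m+1) i).comp (fderiv ℝ u y)) =
              Function.update (projBasis (m+1)) 0 (fderiv ℝ Φ y) := by
            funext i
            ext v
            by_cases hi : i = 0
            · subst hi
              rw [Function.update_self, ← hD0, projBasis_apply]; rfl
            · rw [Function.update_of_ne hi, projBasis_apply]
              exact hDj y v i hi
          rw [h1, update_value (V y) (halt y (hNsub y hy).2.1), hΦG, (hNsub y hy).1]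
          exact inv_mul_cancel₀ (hNsub y hy).2.2
        let P : (y : Fin (m+1) → ℝ) → (((Fin (m+1) → ℝ) →L[ℝ] ℝ) [×(m+1)]→L[ℝ] ℝ) := fun y =>
          (V y).compContinuousLinearMap fun _ =>
            (ContinuousLinearMap.compL ℝ (Fin (m+1) → ℝ) (Fin (m+1) → ℝ) ℝ).flip (fderiv ℝ u y)
        have hP : ∀ y w, P y w = V y (fun i => (w i).comp (fderiv ℝ u y)) := fun y w => rfl
        have hPalt : ∀ y ∈ N, ∀ w : Fin (m+1) → ((Fin (m+1) → ℝ) →L[ℝ] ℝ),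
            ∀ i j, i ≠ j → w i = w j → P y w = 0 := by
          intro y hy w i j hij hw
          rw [hP]
          exact halt y (hNsub y hy).2.1 _ i j hij (by simp only [hw])
        refine ⟨H.source ∩ N, H.open_source.inter hN, ⟨hxH, hxN⟩,
          fun y hy => (hNsub y hy.2).2.1, u, hu.contDiffOn, ?_, ?_, fun y hy => hbij y hy.2,
          P x, fun y hy w => ?_⟩
        · exact H.injOn.mono Set.inter_subset_left
        · exact H.isOpen_image_of_subset_source (H.open_source.inter hN) Set.inter_subset_left
        · rw [← hP]
          have : P x = P y := top_ext _ _ (hPalt x hxN) (hPalt y hy.2)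
            (by rw [hP, hP, hval x hxN, hval y hy.2])
          rw [this]
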